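/- Let A be an n×n type-II matrix and let M, N ∈ N_A. Then: (i) MN ∈ N_A and Θ_A(MN) = Θ_A(M)∘Θ_A(N); (ii) M∘N ∈ N_A and Θ_A(M∘N) = n^{-1}·Θ_A(M)·Θ_A(N); (iii) Mᵀ ∈ N_A and Θ_A(Mᵀ) = Θ_A(M)ᵀ; (iv) M ∈ N_{A^(-)} and Θ_{A^(-)}(M) = Θ_A(M)ᵀ. -/

import Mathlib

open Matrix

variable {m : Type*} [Fintype m] [DecidableEq m]

/-- The Schur (entrywise) inverse `A^(-)` of a matrix: `(A^(-))_{ij} = (A_{ij})⁻¹`. -/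
noncomputable def sinv (A : Matrix m m ℂ) : Matrix m m ℂ := Matrix.of fun i j => (A i j)⁻¹

/-- A type-II matrix: a Schur invertible matrix `W` with `W * (W^(-))ᵀ = n • I`,
where `n` is the size of the matrix. -/
def IsTypeII (A : Matrix m m ℂ) : Prop :=
  (∀ i j, A i j ≠ 0) ∧ A * (sinv A)ᵀ = (Fintype.card m : ℂ) • (1 : Matrix m m ℂ)

/-- `v_{ij} = (A e_i) ∘ (B e_j)`: the entrywise product of column `i` of `A`
with column `j` of `B`. -/
def colProd (A B : Matrix m m ℂ) (i j : m) : m → ℂ := fun k => A k i * B k j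

/-- Membership in the Nomura algebra `N_{A,B}`: every `v_{ij}` is an eigenvector of `M`. -/
def InNomura (A B M : Matrix m m ℂ) : Prop :=
  ∀ i j, ∃ c : ℂ, M.mulVec (colProd A B i j) = c • colProd A B i j

/-- `S = Θ_{A,B}(M)`: the matrix of eigenvalues, i.e. `M v_{ij} = S_{ij} v_{ij}` for all `i,j`. -/
def IsTheta (A B M S : Matrix m m ℂ) : Prop :=
  ∀ i j, M.mulVec (colProd A B i j) = S i j • colProd A B i j

/-- `(A,B)` is a Jones pair: `A` invertible, `B` Schur invertible, and
`X_A Δ_B X_A = Δ_B X_A Δ_B` and `X_A Δ_{Bᵀ} X_A = Δ_{Bᵀ} X_A Δ_{Bᵀ}`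
as operators on matrices. -/
def IsJonesPair (A B : Matrix m m ℂ) : Prop :=
  IsUnit A ∧ (∀ i j, B i j ≠ 0) ∧
  (∀ M : Matrix m m ℂ, A * (B ⊙ (A * M)) = B ⊙ (A * (B ⊙ M))) ∧
  (∀ M : Matrix m m ℂ, A * (Bᵀ ⊙ (A * M)) = Bᵀ ⊙ (A * (Bᵀ ⊙ M)))

/-- An invertible Jones pair: a Jones pair in which moreover `A` is Schur
invertible and `B` is invertible. -/
def IsInvertibleJonesPair (A B : Matrix m m ℂ) : Prop :=
  IsJonesPair A B ∧ (∀ i j, A i j ≠ 0) ∧ IsUnit B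

/-- `W` is a spin model: for some `d` with `d² = n`, `(d⁻¹ W, W^(-))` is an
invertible Jones pair. -/
def IsSpinModel (W : Matrix m m ℂ) : Prop :=
  ∃ d : ℂ, d ^ 2 = (Fintype.card m : ℂ) ∧ IsInvertibleJonesPair (d⁻¹ • W) (sinv W)

/-- Given an invertible Jones pair `(A,B)` with `A` symmetric, `K` is paired with
`H ∈ N_{A,B}` if `Kᵀ ∈ N_{A,Bᵀ}` and `Θ_{A,B}(H) = (Θ_{A,Bᵀ}(Kᵀ))ᵀ`. -/
def Paired (A B H K : Matrix m m ℂ) : Prop :=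
  ∃ S : Matrix m m ℂ, IsTheta A B H S ∧ IsTheta A Bᵀ Kᵀ Sᵀ

/-- The `4n × 4n` matrix with `4 × 4` block structure
`[[P, Q, R, R], [Q, P, R, R], [S, S, T, U], [S, S, U, T]]`. -/
def blockMat {n : ℕ} (P Q R S T U : Matrix (Fin n) (Fin n) ℂ) :
    Matrix (Fin 4 × Fin n) (Fin 4 × Fin n) ℂ :=
  Matrix.of fun x y =>
    (![![P, Q, R, R], ![Q, P, R, R], ![S, S, T, U], ![S, S, U, T]] x.1 y.1) x.2 y.2

/-- Yamada's `4n × 4n` matrix `V` built from `A`, `B` and `d` with `d² = n`. -/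
noncomputable def Vmat {n : ℕ} (A B : Matrix (Fin n) (Fin n) ℂ) (d : ℂ) :
    Matrix (Fin 4 × Fin n) (Fin 4 × Fin n) ℂ :=
  blockMat (d • A) (-(d • A)) (sinv B) (sinv B)ᵀ (d • A) (-(d • A))

/-!
For fixed `i` the vectors `v_{ij}` are the columns of `V_i = diag(A e_i) B`, so `S = Θ_{A,B}(M)`
says that `M V_i = V_i diag(S_{i,*})` for every `i`. If `B` is type II, this amounts to
`n M diag(A e_i) = V_i diag(S_{i,*}) (B^(-))ᵀ`. If moreover `A` is Schur invertible, then
`V_i⁻¹ = n⁻¹ W_iᵀ` with `W_i` built in the same way from `(A^(-), B^(-))`, and transposing gives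
`Θ_{A^(-),B^(-)}(Mᵀ) = S`. For the Schur product, substituting the expansion of `M` reduces the
claim to `(A e_i ∘ B e_r) ∘ (B^(-) e_r ∘ C e_j) = A e_i ∘ C e_j`.
-/

section Basic

variable {ι : Type*}

@[simp]
theorem sinv_sinv (A : Matrix ι ι ℂ) : sinv (sinv A) = A := by
  ext i j
  simp [sinv]

theorem colProd_comm (A B : Matrix ι ι ℂ) (i j : ι) : colProd A B i j = colProd B A j i :=
  funext fun _ => mul_comm _ _

theorem colProd_mul_colProd_sinv {B : Matrix ι ι ℂ} (hB : ∀ i j, B i j ≠ 0) (A C : Matrix ι ι ℂ)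
    (i r j : ι) : colProd A B i r * colProd (sinv B) C r j = colProd A C i j := by
  ext k
  have := hB k r
  simp only [Pi.mul_apply, colProd, sinv, of_apply]
  field_simp

theorem diagonal_col_sinv_mul_diagonal_col [Fintype ι] [DecidableEq ι] {A : Matrix ι ι ℂ}
    (hA : ∀ i j, A i j ≠ 0) (i : ι) : diagonal ((sinv A).col i) * diagonal (A.col i) = 1 := by
  simp [sinv, hA]

end Basic

section TypeII

variable {ι : Type*} [Fintype ι] [DecidableEq ι] {A : Matrix ι ι ℂ}

protected theorem IsTypeII.sinv (hA : IsTypeII A) : IsTypeII (sinv A) := by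
  refine ⟨fun i j => inv_ne_zero (hA.1 i j), ?_⟩
  simpa using congrArg transpose hA.2

theorem IsTypeII.transpose_sinv_mul (hA : IsTypeII A) :
    (sinv A)ᵀ * A = (Fintype.card ι : ℂ) • (1 : Matrix ι ι ℂ) := by
  cases isEmpty_or_nonempty ι
  · exact Subsingleton.elim _ _
  have hcard : (Fintype.card ι : ℂ) ≠ 0 := Nat.cast_ne_zero.2 Fintype.card_ne_zero
  have hright : A * ((Fintype.card ι : ℂ)⁻¹ • (sinv A)ᵀ) = 1 := by
    rw [Matrix.mul_smul, hA.2, inv_smul_smul₀ hcard]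
  rw [← inv_smul_eq_iff₀ hcard, ← Matrix.smul_mul]
  exact mul_eq_one_comm.1 hright

end TypeII

section Nomura

variable {ι : Type*} [Fintype ι] {A B C M N S T : Matrix ι ι ℂ}

protected theorem IsTheta.mul (hM : IsTheta A B M S) (hN : IsTheta A B N T) :
    IsTheta A B (M * N) (S ⊙ T) := fun i j => by
  rw [← mulVec_mulVec, hN i j, mulVec_smul, hM i j, smul_smul, hadamard_apply, mul_comm]

protected theorem IsTheta.swap (hM : IsTheta A B M S) : IsTheta B A M Sᵀ := fun i j => by
  rw [colProd_comm, hM j i, transpose_apply]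

variable [DecidableEq ι]

theorem isTheta_iff_mul_diagonal_col_mul : IsTheta A B M S ↔
    ∀ i, M * (diagonal (A.col i) * B) = diagonal (A.col i) * B * diagonal (S i) := by
  refine forall_congr' fun i => ?_
  rw [← Matrix.ext_iff, forall_comm]
  refine forall_congr' fun j => ?_
  simp [funext_iff, mulVec, dotProduct, mul_apply (M := M), mul_diagonal, diagonal_mul, colProd,
    mul_comm]

theorem IsTheta.card_smul_mul_diagonal_col (hB : IsTypeII B) (hM : IsTheta A B M S) (i : ι) :
    (Fintype.card ι : ℂ) • (M * diagonal (A.col i)) =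
      diagonal (A.col i) * B * diagonal (S i) * (sinv B)ᵀ := by
  rw [← isTheta_iff_mul_diagonal_col_mul.1 hM i, Matrix.mul_assoc, Matrix.mul_assoc, hB.2]
  simp

theorem IsTheta.transpose_sinv (hA : ∀ i j, A i j ≠ 0) (hB : IsTypeII B) (hM : IsTheta A B M S) :
    IsTheta (sinv A) (sinv B) Mᵀ S := by
  refine isTheta_iff_mul_diagonal_col_mul.2 fun i => transpose_injective ?_
  have : Nonempty ι := ⟨i⟩
  have hcard : (Fintype.card ι : ℂ) ≠ 0 := Nat.cast_ne_zero.2 Fintype.card_ne_zero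
  set a := diagonal (A.col i)
  set a' := diagonal ((sinv A).col i)
  set B' := (sinv B)ᵀ
  set D := diagonal (S i)
  have ha : a' * a = 1 := diagonal_col_sinv_mul_diagonal_col hA i
  suffices B' * a' * M = D * (B' * a') by
    simpa [a', D, B', transpose_mul, Matrix.mul_assoc] using this
  refine smul_right_injective _ hcard ?_
  calc (Fintype.card ι : ℂ) • (B' * a' * M)
      = B' * a' * ((Fintype.card ι : ℂ) • (M * a)) * a' := by
        simp [Matrix.mul_assoc, mul_eq_one_comm.1 ha]
    _ = B' * (a' * a) * B * D * B' * a' := by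
        rw [hM.card_smul_mul_diagonal_col hB i]
        simp only [a, a', B', D, Matrix.mul_assoc]
    _ = (Fintype.card ι : ℂ) • (D * (B' * a')) := by
        rw [ha, Matrix.mul_one, hB.transpose_sinv_mul]
        simp [Matrix.mul_assoc]

theorem IsTheta.card_mul_apply (hB : IsTypeII B) (hM : IsTheta A B M S) (i u k : ι) :
    (Fintype.card ι : ℂ) * (M u k * A k i) = ∑ r, S i r * colProd A B i r u * sinv B k r := by
  have h := congrFun₂ (hM.card_smul_mul_diagonal_col hB i) u k
  rw [Matrix.smul_apply, mul_diagonal, mul_apply] at h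
  simpa [mul_diagonal, diagonal_mul, colProd, mul_comm] using h

protected theorem IsTheta.hadamard (hB : IsTypeII B) (hM : IsTheta A B M S)
    (hN : IsTheta (sinv B) C N T) :
    IsTheta A C (M ⊙ N) ((Fintype.card ι : ℂ)⁻¹ • (S * T)) := fun i j => by
  have : Nonempty ι := ⟨i⟩
  have hcard : (Fintype.card ι : ℂ) ≠ 0 := Nat.cast_ne_zero.2 Fintype.card_ne_zero
  rw [Matrix.smul_apply, smul_assoc, eq_inv_smul_iff₀ hcard]
  ext u
  calc (Fintype.card ι : ℂ) * ((M ⊙ N) *ᵥ colProd A C i j) u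
      = ∑ k, (Fintype.card ι : ℂ) * (M u k * A k i) * (N u k * C k j) := by
        simp only [mulVec, dotProduct, hadamard_apply, colProd, Finset.mul_sum]
        exact Finset.sum_congr rfl fun k _ => by ring
    _ = ∑ r, S i r * colProd A B i r u * (N *ᵥ colProd (sinv B) C r j) u := by
        simp only [hM.card_mul_apply hB, mulVec, dotProduct, Finset.sum_mul, Finset.mul_sum]
        rw [Finset.sum_comm]
        exact Finset.sum_congr rfl fun r _ => Finset.sum_congr rfl fun k _ => by
          simp only [colProd]
          ring
    _ = ∑ r, S i r * T r j * (colProd A B i r * colProd (sinv B) C r j) u := by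
        refine Finset.sum_congr rfl fun r _ => ?_
        rw [hN r j, Pi.smul_apply, Pi.mul_apply, smul_eq_mul]
        ring
    _ = (S * T) i j * colProd A C i j u := by
        simp only [colProd_mul_colProd_sinv hB.1, mul_apply, Finset.sum_mul]

theorem theta_properties_general (hA : IsTypeII A) (hM : IsTheta A (sinv A) M S)
    (hN : IsTheta A (sinv A) N T) :
    IsTheta A (sinv A) (M * N) (S ⊙ T) ∧
    IsTheta A (sinv A) (M ⊙ N) ((Fintype.card ι : ℂ)⁻¹ • (S * T)) ∧
    IsTheta A (sinv A) Mᵀ Sᵀ ∧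
    IsTheta (sinv A) (sinv (sinv A)) M Sᵀ := by
  refine ⟨hM.mul hN, hM.hadamard hA.sinv ?_, ?_, ?_⟩
  · rwa [sinv_sinv]
  · simpa using (hM.transpose_sinv hA.1 hA.sinv).swap
  · simpa using hM.swap

end Nomura

theorem theta_properties {n : ℕ} (hn : 0 < n) (A M N SM SN : Matrix (Fin n) (Fin n) ℂ)
    (hA : IsTypeII A)
    (hM : IsTheta A (sinv A) M SM) (hN : IsTheta A (sinv A) N SN) :
    IsTheta A (sinv A) (M * N) (SM ⊙ SN) ∧
    IsTheta A (sinv A) (M ⊙ N) ((n : ℂ)⁻¹ • (SM * SN)) ∧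
    IsTheta A (sinv A) Mᵀ SMᵀ ∧
    IsTheta (sinv A) (sinv (sinv A)) M SMᵀ := by
  simpa using theta_properties_general hA hM hN
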